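/- Let m ∈ ℝ, t ∈ [0,1], ℏ ∈ (0,1] and a ∈ S^m_f(ℝ^{2n}), let K, L ⊂ ℝⁿ be compact and let N ∈ ℕ. Then there exist C > 0 and N' ∈ ℕ such that | ∫_{ℝⁿ} a(tq + (1-t)q', p) e^{-i p·q'/ℏ} u(q') dq' | ≤ C ⟨p⟩^{-N} Σ_{|β| ≤ N'} sup_{ℝⁿ} |∂_q^β u| for all q ∈ K, all p ∈ ℝⁿ and all u ∈ C_c^∞(ℝⁿ) with supp u ⊂ L. -/

import Mathlib

open MeasureTheory Finset

noncomputable section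

/-- Points of `ℝⁿ` (with `n = d + 1`) split as `q = (r, θ) ∈ ℝ × ℝ^d`. -/
abbrev Q (d : ℕ) : Type := ℝ × (Fin d → ℝ)

/-- The coordinate direction `∂_r`. -/
def eR (d : ℕ) : Q d := ((1 : ℝ), 0)

/-- The coordinate direction `∂_{θ_i}`. -/
def eTh (d : ℕ) (i : Fin d) : Q d := ((0 : ℝ), Pi.single i 1)

/-- Directional derivative of a complex-valued function. -/
def dirD {E : Type*} [NormedAddCommGroup E] [NormedSpace ℝ E]
    (v : E) (g : E → ℂ) : E → ℂ :=
  fun x => fderiv ℝ g x v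

/-- Multiindices `α = (α₀, α')` split as in the paper. -/
abbrev MIdx (d : ℕ) : Type := ℕ × (Fin d → ℕ)

/-- `|α| = α₀ + |α'|`. -/
def deg {d : ℕ} (α : MIdx d) : ℕ := α.1 + ∑ i, α.2 i

/-- `|α'|`, the angular part of a multiindex. -/
def degA {d : ℕ} (α : MIdx d) : ℕ := ∑ i, α.2 i

/-- `∂_q^α` acting on functions on `ℝⁿ = ℝ × ℝ^d`. -/
def mderiv1 {d : ℕ} (α : MIdx d) (g : Q d → ℂ) : Q d → ℂ :=
  (dirD (eR d))^[α.1] <|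
    (List.finRange d).foldr (fun i h => (dirD (eTh d i))^[α.2 i] h) g

/-- `∂_q^α ∂_p^β` acting on functions on phase space. -/
def mderiv2 {d : ℕ} (α β : MIdx d) (g : Q d × Q d → ℂ) : Q d × Q d → ℂ :=
  (dirD ((eR d, 0) : Q d × Q d))^[α.1] <|
  (List.finRange d).foldr (fun i h => (dirD ((eTh d i, 0) : Q d × Q d))^[α.2 i] h) <|
  (dirD (((0 : Q d), eR d) : Q d × Q d))^[β.1] <|
  (List.finRange d).foldr (fun i h => (dirD (((0 : Q d), eTh d i) : Q d × Q d))^[β.2 i] h) g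

/-- `∂_q^α ∂_p^β ∂_{q'}^γ` acting on amplitudes `a(q, p, q')`. -/
def mderiv3 {d : ℕ} (α β γ : MIdx d) (g : Q d × Q d × Q d → ℂ) : Q d × Q d × Q d → ℂ :=
  (dirD ((eR d, 0, 0) : Q d × Q d × Q d))^[α.1] <|
  (List.finRange d).foldr (fun i h => (dirD ((eTh d i, 0, 0) : Q d × Q d × Q d))^[α.2 i] h) <|
  (dirD (((0 : Q d), eR d, 0) : Q d × Q d × Q d))^[β.1] <|
  (List.finRange d).foldr (fun i h => (dirD (((0 : Q d), eTh d i, 0) : Q d × Q d × Q d))^[β.2 i] h) <|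
  (dirD (((0 : Q d), (0 : Q d), eR d) : Q d × Q d × Q d))^[γ.1] <|
  (List.finRange d).foldr (fun i h => (dirD (((0 : Q d), (0 : Q d), eTh d i) : Q d × Q d × Q d))^[γ.2 i] h) g

/-- `⟨p⟩ = (1 + ρ² + |η|²)^{1/2}`. -/
def brP {d : ℕ} (p : Q d) : ℝ := Real.sqrt (1 + p.1 ^ 2 + ∑ i, (p.2 i) ^ 2)

/-- `⟨ρ ⊕ f(r)⁻¹ η⟩` evaluated at a phase-space point. -/
def brF {d : ℕ} (f : ℝ → ℝ) (x : Q d × Q d) : ℝ :=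
  Real.sqrt (1 + x.2.1 ^ 2 + ∑ i, (x.2.2 i / f x.1.1) ^ 2)

/-- The standing assumption on `f : ℝ → [1, ∞)`: smooth, `f ≥ 1`, and all derivatives
of `log f` of order `≥ 1` are bounded. -/
def GoodF (f : ℝ → ℝ) : Prop :=
  ContDiff ℝ (⊤ : ℕ∞) f ∧ (∀ r, 1 ≤ f r) ∧
    ∀ j : ℕ, 1 ≤ j → ∃ C : ℝ, ∀ r, |iteratedDeriv j (fun s => Real.log (f s)) r| ≤ C

/-- Membership in the symbol class `S^m_f(ℝ^{2n})`. -/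
def IsSymbol {d : ℕ} (f : ℝ → ℝ) (m : ℝ) (a : Q d × Q d → ℂ) : Prop :=
  ContDiff ℝ (⊤ : ℕ∞) a ∧
    ∀ α β : MIdx d, ∃ C : ℝ, ∀ x : Q d × Q d,
      ‖mderiv2 α β a x‖ ≤ C * f x.1.1 ^ ((degA α : ℝ) - (degA β : ℝ)) * brF f x ^ (m - (deg β : ℝ))

/-- The finite set of multiindices of length `≤ N`. -/
def idxSet (d N : ℕ) : Finset (MIdx d) :=
  ((Finset.range (N + 1)) ×ˢ Fintype.piFinset fun _ : Fin d => Finset.range (N + 1)).filter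
    fun α => deg α ≤ N

/-- The seminorm `|a|_{S^m_f, N}`. -/
def symNorm {d : ℕ} (f : ℝ → ℝ) (m : ℝ) (N : ℕ) (a : Q d × Q d → ℂ) : ℝ :=
  ∑ α ∈ idxSet d N, ∑ β ∈ idxSet d N,
    if deg α + deg β ≤ N then
      ⨆ x : Q d × Q d,
        f x.1.1 ^ (-(degA α : ℝ) + (degA β : ℝ)) * brF f x ^ (-m + (deg β : ℝ)) *
          ‖mderiv2 α β a x‖
    else 0

/-- `p · q`. -/
def qdot {d : ℕ} (p q : Q d) : ℝ := p.1 * q.1 + ∑ i, p.2 i * q.2 i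

/-- The oscillating factor `e^{i p · v / ℏ}`. -/
def ephase {d : ℕ} (ℏ : ℝ) (p v : Q d) : ℂ :=
  Complex.exp (Complex.I * Complex.ofReal (qdot p v) / Complex.ofReal ℏ)

/-- The quantization `Op^t_ℏ(a)` of a symbol, acting on functions (trivialized half-densities). -/
def Op {d : ℕ} (ℏ t : ℝ) (a : Q d × Q d → ℂ) (u : Q d → ℂ) : Q d → ℂ :=
  fun q => ((2 * Real.pi * ℏ) ^ (d + 1) : ℝ)⁻¹ •
    ∫ p : Q d, ∫ q' : Q d,
      a (t • q + (1 - t) • q', p) * ephase ℏ p (q - q') * u q'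

/-- Membership in `C_c^∞(ℝⁿ)`. -/
def IsCc {d : ℕ} (u : Q d → ℂ) : Prop := ContDiff ℝ (⊤ : ℕ∞) u ∧ HasCompactSupport u

/-- The `L²` inner product `⟨w, v⟩ = ∫ w \bar v`. -/
def l2inner {d : ℕ} (w v : Q d → ℂ) : ℂ := ∫ q : Q d, w q * (starRingEnd ℂ) (v q)

/-- The `L²` norm. -/
def l2norm {d : ℕ} (u : Q d → ℂ) : ℝ := (∫ q : Q d, ‖u q‖ ^ 2) ^ (1 / 2 : ℝ)

/-- `Σ_{|β| ≤ N} sup |∂^β u|`. -/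
def ckNorm {d : ℕ} (N : ℕ) (u : Q d → ℂ) : ℝ :=
  ∑ β ∈ idxSet d N, ⨆ q : Q d, ‖mderiv1 β u q‖

/-- `⟨ρ ⊕ f(tr + (1-t)r')⁻¹ η⟩` evaluated at a point `(q, p, q')`. -/
def brFA {d : ℕ} (f : ℝ → ℝ) (t : ℝ) (x : Q d × Q d × Q d) : ℝ :=
  Real.sqrt (1 + x.2.1.1 ^ 2 + ∑ i, (x.2.1.2 i / f (t * x.1.1 + (1 - t) * x.2.2.1)) ^ 2)

/-- Membership in the amplitude class `BS^m_{f,t}(ℝ^{3n})`. -/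
def IsAmp {d : ℕ} (f : ℝ → ℝ) (m t : ℝ) (a : Q d × Q d × Q d → ℂ) : Prop :=
  ContDiff ℝ (⊤ : ℕ∞) a ∧
    ∀ α β γ : MIdx d, ∃ C : ℝ, ∀ x : Q d × Q d × Q d,
      ‖mderiv3 α β γ a x‖ ≤
        C * f (t * x.1.1 + (1 - t) * x.2.2.1) ^ ((degA α : ℝ) - (degA β : ℝ) + (degA γ : ℝ)) *
          brFA f t x ^ (m - (deg β : ℝ))

/-- The seminorm `|a|_{BS^m_{f,t}, N}`. -/
def ampNorm {d : ℕ} (f : ℝ → ℝ) (m t : ℝ) (N : ℕ) (a : Q d × Q d × Q d → ℂ) : ℝ :=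
  ∑ α ∈ idxSet d N, ∑ β ∈ idxSet d N, ∑ γ ∈ idxSet d N,
    if deg α + deg β + deg γ ≤ N then
      ⨆ x : Q d × Q d × Q d,
        f (t * x.1.1 + (1 - t) * x.2.2.1) ^ (-(degA α : ℝ) + (degA β : ℝ) - (degA γ : ℝ)) *
          brFA f t x ^ (-m + (deg β : ℝ)) * ‖mderiv3 α β γ a x‖
    else 0

/-- The quantization of an amplitude `a(q, p, q')`. -/
def OpAmp {d : ℕ} (ℏ : ℝ) (a : Q d × Q d × Q d → ℂ) (u : Q d → ℂ) : Q d → ℂ :=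
  fun q => ((2 * Real.pi * ℏ) ^ (d + 1) : ℝ)⁻¹ •
    ∫ p : Q d, ∫ q' : Q d, a (q, p, q') * ephase ℏ p (q - q') * u q'


/-!
Nonstationary phase. For a linear form `ℓ` and a direction `v`, integrating by parts `k` times
along `v` gives `(i ℓ(v))^k ∫ g e^{-iℓ} = ∫ ∂_v^k g · e^{-iℓ}`. Take `ℓ = p / ℏ`,
`g = a(tq + (1-t)·, p) u` and for `v` the coordinate direction in which `p` is largest, so that
`⟨p⟩` is comparable to `max 1 |p · v|`. On a compact set `f` is bounded above and away from zero,
so every `q`-derivative of `a` grows at most like `⟨p⟩^|m|` there, and `k = N + ⌈|m|⌉` integrations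
by parts suffice.
-/

section DirectionalDerivative

variable {E : Type*} [NormedAddCommGroup E] [NormedSpace ℝ E] {g h : E → ℂ}

theorem contDiff_dirD (v : E) (hg : ContDiff ℝ (⊤ : ℕ∞) g) : ContDiff ℝ (⊤ : ℕ∞) (dirD v g) :=
  (hg.fderiv_right (m := (⊤ : ℕ∞)) (by simp)).clm_apply contDiff_const

theorem contDiff_iterate_dirD (v : E) (k : ℕ) (hg : ContDiff ℝ (⊤ : ℕ∞) g) :
    ContDiff ℝ (⊤ : ℕ∞) ((dirD v)^[k] g) :=
  Function.Iterate.rec (ContDiff ℝ (⊤ : ℕ∞)) hg (fun _ => contDiff_dirD v) k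

theorem tsupport_iterate_dirD_subset (v : E) (k : ℕ) (g : E → ℂ) :
    tsupport ((dirD v)^[k] g) ⊆ tsupport g :=
  Function.Iterate.rec (fun h => tsupport h ⊆ tsupport g) subset_rfl
    (fun _ => (tsupport_fderiv_apply_subset ℝ v).trans) k

theorem iteratedDeriv_comp_line (hg : ContDiff ℝ (⊤ : ℕ∞) g) (v x : E) (k : ℕ) (r : ℝ) :
    iteratedDeriv k (fun s : ℝ => g (x + s • v)) r = (dirD v)^[k] g (x + r • v) := by
  induction k generalizing r with
  | zero => simp
  | succ k ih =>
    have hline : HasDerivAt (fun s : ℝ => x + s • v) v r := by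
      simpa using ((hasDerivAt_id r).smul_const v).const_add x
    have hdiff := (contDiff_iterate_dirD v k hg).differentiable (by simp) (x + r • v)
    rw [iteratedDeriv_succ, funext ih, Function.iterate_succ_apply']
    exact (hdiff.hasFDerivAt.comp_hasDerivAt r hline).deriv

theorem iterate_dirD_eq_iteratedDeriv (hg : ContDiff ℝ (⊤ : ℕ∞) g) (v x : E) (k : ℕ) :
    (dirD v)^[k] g x = iteratedDeriv k (fun s : ℝ => g (x + s • v)) 0 := by
  rw [iteratedDeriv_comp_line hg, zero_smul, add_zero]

theorem iterate_dirD_mul (v : E) (k : ℕ) (hg : ContDiff ℝ (⊤ : ℕ∞) g)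
    (hh : ContDiff ℝ (⊤ : ℕ∞) h) (x : E) :
    (dirD v)^[k] (fun y => g y * h y) x =
      ∑ i ∈ range (k + 1), k.choose i * (dirD v)^[i] g x * (dirD v)^[k - i] h x := by
  have restrict {b : E → ℂ} (hb : ContDiff ℝ (⊤ : ℕ∞) b) :
      ContDiffAt ℝ k (fun s : ℝ => b (x + s • v)) 0 :=
    ((hb.of_le (mod_cast le_top)).comp (by fun_prop)).contDiffAt
  rw [iterate_dirD_eq_iteratedDeriv (hg.mul hh),
    iteratedDeriv_fun_mul (restrict hg) (restrict hh)]
  simp only [iterate_dirD_eq_iteratedDeriv hg, iterate_dirD_eq_iteratedDeriv hh]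

theorem norm_iterate_dirD_mul_le (v : E) (k : ℕ) (hg : ContDiff ℝ (⊤ : ℕ∞) g)
    (hh : ContDiff ℝ (⊤ : ℕ∞) h) {x : E} {A B : ℝ}
    (hA : ∀ i ≤ k, ‖(dirD v)^[i] g x‖ ≤ A) (hB : ∀ i ≤ k, ‖(dirD v)^[i] h x‖ ≤ B) :
    ‖(dirD v)^[k] (fun y => g y * h y) x‖ ≤ 2 ^ k * (A * B) := by
  have hA0 : 0 ≤ A := (norm_nonneg _).trans (hA 0 k.zero_le)
  calc ‖(dirD v)^[k] (fun y => g y * h y) x‖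
      ≤ ∑ i ∈ range (k + 1), k.choose i * (A * B) := by
        rw [iterate_dirD_mul v k hg hh]
        refine norm_sum_le_of_le _ fun i hi => ?_
        rw [norm_mul, norm_mul, Complex.norm_natCast, mul_assoc]
        gcongr
        · exact hA i (Nat.lt_succ_iff.1 (mem_range.1 hi))
        · exact hB (k - i) (Nat.sub_le k i)
    _ = 2 ^ k * (A * B) := by
        rw [← Finset.sum_mul, ← Nat.cast_sum, Nat.sum_range_choose, Nat.cast_pow, Nat.cast_ofNat]

theorem iterate_dirD_comp_affine_prodMk {F : Type*} [NormedAddCommGroup F] [NormedSpace ℝ F]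
    {a : E × F → ℂ} (ha : ContDiff ℝ (⊤ : ℕ∞) a) (v c x : E) (p : F) (s : ℝ) (k : ℕ) :
    (dirD v)^[k] (fun y => a (c + s • y, p)) x = s ^ k • (dirD (v, 0))^[k] a (c + s • x, p) := by
  have hline : ContDiff ℝ k (fun r : ℝ => a ((c + s • x, p) + r • (v, 0))) :=
    (ha.of_le (mod_cast le_top)).comp (by fun_prop)
  have hrescale : (fun r : ℝ => a (c + s • (x + r • v), p)) =
      fun r => a ((c + s • x, p) + (s * r) • (v, 0)) := by
    funext r
    simp [smul_add, smul_smul, add_assoc]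
  have hslice : ContDiff ℝ (⊤ : ℕ∞) (fun y => a (c + s • y, p)) := ha.comp (by fun_prop)
  rw [iterate_dirD_eq_iteratedDeriv hslice, hrescale,
    iteratedDeriv_comp_const_smul hline, iterate_dirD_eq_iteratedDeriv ha]
  simp only [mul_zero]

end DirectionalDerivative

section OscillatoryIntegral

variable {E : Type*} [NormedAddCommGroup E] [NormedSpace ℝ E]

theorem hasFDerivAt_cexp_neg_I_mul (ℓ : E →L[ℝ] ℝ) (x : E) :
    HasFDerivAt (fun y => Complex.exp (-Complex.I * ℓ y))
      (Complex.exp (-Complex.I * ℓ x) • -Complex.I • Complex.ofRealCLM.comp ℓ) x :=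
  ((Complex.ofRealCLM.comp ℓ).hasFDerivAt.const_mul (-Complex.I)).cexp

variable [MeasurableSpace E] [BorelSpace E] {μ : Measure E} {g h : E → ℂ}

theorem integrable_mul_cexp_neg_I_mul [IsFiniteMeasureOnCompacts μ] (ℓ : E →L[ℝ] ℝ)
    (hg : Continuous g) (hgc : HasCompactSupport g) :
    Integrable (fun x => g x * Complex.exp (-Complex.I * ℓ x)) μ :=
  (hg.mul (by fun_prop)).integrable_of_hasCompactSupport hgc.mul_right

variable [FiniteDimensional ℝ E] [μ.IsAddHaarMeasure]

theorem integral_dirD_mul_cexp (ℓ : E →L[ℝ] ℝ) (v : E) (hg : ContDiff ℝ (⊤ : ℕ∞) g)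
    (hgc : HasCompactSupport g) :
    ∫ x, dirD v g x * Complex.exp (-Complex.I * ℓ x) ∂μ =
      Complex.I * ℓ v * ∫ x, g x * Complex.exp (-Complex.I * ℓ x) ∂μ := by
  have hphase (x : E) : g x * fderiv ℝ (fun y => Complex.exp (-Complex.I * ℓ y)) x v =
      -(Complex.I * ℓ v) * (g x * Complex.exp (-Complex.I * ℓ x)) := by
    rw [(hasFDerivAt_cexp_neg_I_mul ℓ x).fderiv]
    simp only [smul_apply, ContinuousLinearMap.comp_apply, Complex.ofRealCLM_apply, smul_eq_mul]
    ring
  have hint := integrable_mul_cexp_neg_I_mul (μ := μ) ℓ hg.continuous hgc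
  have hint' := integrable_mul_cexp_neg_I_mul (μ := μ) ℓ (contDiff_dirD v hg).continuous
    (hgc.fderiv_apply ℝ v)
  have hparts := integral_mul_fderiv_eq_neg_fderiv_mul_of_integrable hint'
    (by simpa only [hphase] using hint.const_mul _) hint
    (fun x _ => hg.differentiable (by simp) x)
    (fun x _ => (hasFDerivAt_cexp_neg_I_mul ℓ x).differentiableAt)
  simp only [hphase, integral_const_mul] at hparts
  exact (neg_inj.1 ((neg_mul _ _).symm.trans hparts)).symm

theorem integral_iterate_dirD_mul_cexp (ℓ : E →L[ℝ] ℝ) (v : E) (k : ℕ)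
    (hg : ContDiff ℝ (⊤ : ℕ∞) g) (hgc : HasCompactSupport g) :
    ∫ x, (dirD v)^[k] g x * Complex.exp (-Complex.I * ℓ x) ∂μ =
      (Complex.I * ℓ v) ^ k * ∫ x, g x * Complex.exp (-Complex.I * ℓ x) ∂μ := by
  induction k with
  | zero => simp
  | succ k ih =>
    simp only [Function.iterate_succ_apply']
    rw [integral_dirD_mul_cexp ℓ v (contDiff_iterate_dirD v k hg)
      (hgc.of_isClosed_subset (isClosed_tsupport _) (tsupport_iterate_dirD_subset v k g)), ih,
      pow_succ', ← mul_assoc]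

variable {L : Set E} {A B : ℝ}

theorem abs_pow_mul_norm_integral_cexp_le (ℓ : E →L[ℝ] ℝ) (v : E) (k : ℕ)
    (hg : ContDiff ℝ (⊤ : ℕ∞) g) (hL : IsCompact L) (hgL : tsupport g ⊆ L)
    (hA : ∀ x ∈ L, ‖(dirD v)^[k] g x‖ ≤ A) :
    |ℓ v| ^ k * ‖∫ x, g x * Complex.exp (-Complex.I * ℓ x) ∂μ‖ ≤ A * μ.real L := by
  have hgc : HasCompactSupport g := hL.of_isClosed_subset (isClosed_tsupport g) hgL
  have hvanish (x : E) (hx : x ∉ L) :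
      (dirD v)^[k] g x * Complex.exp (-Complex.I * ℓ x) = 0 := by
    rw [image_eq_zero_of_notMem_tsupport
      fun hmem => hx (hgL (tsupport_iterate_dirD_subset v k g hmem)), zero_mul]
  calc |ℓ v| ^ k * ‖∫ x, g x * Complex.exp (-Complex.I * ℓ x) ∂μ‖
      = ‖∫ x, (dirD v)^[k] g x * Complex.exp (-Complex.I * ℓ x) ∂μ‖ := by
        rw [integral_iterate_dirD_mul_cexp ℓ v k hg hgc, norm_mul, norm_pow, norm_mul,
          Complex.norm_I, one_mul, Complex.norm_real, Real.norm_eq_abs]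
    _ = ‖∫ x in L, (dirD v)^[k] g x * Complex.exp (-Complex.I * ℓ x) ∂μ‖ := by
        rw [setIntegral_eq_integral_of_forall_compl_eq_zero hvanish]
    _ ≤ A * μ.real L :=
        norm_setIntegral_le_of_norm_le_const hL.measure_lt_top fun x hx => by
          simpa [Complex.norm_exp] using hA x hx

theorem max_one_abs_pow_mul_norm_integral_mul_cexp_le (ℓ : E →L[ℝ] ℝ) (v : E) (k : ℕ)
    (hg : ContDiff ℝ (⊤ : ℕ∞) g) (hh : ContDiff ℝ (⊤ : ℕ∞) h)
    (hL : IsCompact L) (hhL : tsupport h ⊆ L)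
    (hA : ∀ i ≤ k, ∀ x ∈ L, ‖(dirD v)^[i] g x‖ ≤ A)
    (hB : ∀ i ≤ k, ∀ x ∈ L, ‖(dirD v)^[i] h x‖ ≤ B) :
    max 1 |ℓ v| ^ k * ‖∫ x, g x * h x * Complex.exp (-Complex.I * ℓ x) ∂μ‖ ≤
      2 ^ k * (A * B) * μ.real L := by
  have hghL : tsupport (fun x => g x * h x) ⊆ L := tsupport_mul_subset_right.trans hhL
  have hbound (j : ℕ) (hj : j ≤ k) (x : E) (hx : x ∈ L) :
      ‖(dirD v)^[j] (fun y => g y * h y) x‖ ≤ 2 ^ k * (A * B) := by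
    have hle := norm_iterate_dirD_mul_le v j hg hh (fun i hi => hA i (hi.trans hj) x hx)
      fun i hi => hB i (hi.trans hj) x hx
    have hAB : 0 ≤ A * B := nonneg_of_mul_nonneg_right ((norm_nonneg _).trans hle) (by positivity)
    exact hle.trans (by gcongr; norm_num)
  rcases max_choice 1 |ℓ v| with hmax | hmax <;> rw [hmax]
  · simpa only [one_pow, pow_zero] using
      abs_pow_mul_norm_integral_cexp_le (μ := μ) ℓ v 0 (hg.mul hh) hL hghL (hbound 0 k.zero_le)
  · exact abs_pow_mul_norm_integral_cexp_le ℓ v k (hg.mul hh) hL hghL (hbound k le_rfl)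

end OscillatoryIntegral

section Coordinates

variable {d : ℕ}

/-- The coordinate directions of `ℝⁿ`: `none` stands for `∂_r` and `some i` for `∂_{θ_i}`. -/
def coordDir : Option (Fin d) → Q d
  | none => eR d
  | some i => eTh d i

/-- The multiindex of the `k`-th derivative in the coordinate direction `coordDir o`. -/
def coordIdx (k : ℕ) : Option (Fin d) → MIdx d
  | none => (k, 0)
  | some i => (0, Pi.single i k)

instance isAddHaarMeasure_volume : (volume : Measure (Q d)).IsAddHaarMeasure :=
  Measure.prod.instIsAddHaarMeasure volume volume

theorem foldr_iterate_single {ι X : Type*} [DecidableEq ι] (D : ι → X → X) (i : ι) (k : ℕ) (x : X)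
    {l : List ι} (hl : l.Nodup) :
    l.foldr (fun j y => (D j)^[(Pi.single i k : ι → ℕ) j] y) x =
      if i ∈ l then (D i)^[k] x else x := by
  induction l with
  | nil => rfl
  | cons j l ih =>
    obtain ⟨hj, hl⟩ := List.nodup_cons.1 hl
    rw [List.foldr_cons, ih hl]
    rcases eq_or_ne j i with rfl | hji
    · simp [hj]
    · simp [hji, hji.symm]

theorem mderiv1_coordIdx (o : Option (Fin d)) (k : ℕ) (u : Q d → ℂ) :
    mderiv1 (coordIdx k o) u = (dirD (coordDir o))^[k] u := by
  cases o with
  | none => simp [mderiv1, coordIdx, coordDir]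
  | some i =>
    simp [mderiv1, coordIdx, coordDir,
      foldr_iterate_single (fun j => dirD (eTh d j)) i k u (List.nodup_finRange d)]

theorem mderiv2_coordIdx_zero (o : Option (Fin d)) (k : ℕ) (a : Q d × Q d → ℂ) :
    mderiv2 (coordIdx k o) 0 a = (dirD (coordDir o, 0))^[k] a := by
  cases o with
  | none => simp [mderiv2, coordIdx, coordDir]
  | some i =>
    simp [mderiv2, coordIdx, coordDir,
      foldr_iterate_single (fun j => dirD ((eTh d j, 0) : Q d × Q d)) i k a (List.nodup_finRange d)]

theorem deg_coordIdx (k : ℕ) (o : Option (Fin d)) : deg (coordIdx k o) = k := by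
  cases o <;> simp [deg, coordIdx]

theorem mem_idxSet {α : MIdx d} {N : ℕ} : α ∈ idxSet d N ↔ deg α ≤ N := by
  refine ⟨fun h => (mem_filter.1 h).2, fun h => mem_filter.2 ⟨?_, h⟩⟩
  have hcoord (i : Fin d) : α.2 i ≤ ∑ j, α.2 j := Finset.single_le_sum (by simp) (mem_univ i)
  simp only [mem_product, Fintype.mem_piFinset, mem_range]
  unfold deg at h
  exact ⟨by omega, fun i => by have := hcoord i; omega⟩

theorem coordIdx_mem_idxSet {k N : ℕ} (h : k ≤ N) (o : Option (Fin d)) :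
    coordIdx k o ∈ idxSet d N :=
  mem_idxSet.2 ((deg_coordIdx k o).trans_le h)

end Coordinates

section TestFunctions

variable {d : ℕ} {u : Q d → ℂ}

theorem isCc_iterate_dirD (hu : IsCc u) (v : Q d) (k : ℕ) : IsCc ((dirD v)^[k] u) :=
  ⟨contDiff_iterate_dirD v k hu.1,
    hu.2.of_isClosed_subset (isClosed_tsupport _) (tsupport_iterate_dirD_subset v k u)⟩

theorem isCc_mderiv1 (hu : IsCc u) (β : MIdx d) : IsCc (mderiv1 β u) :=
  isCc_iterate_dirD (List.foldrRecOn (motive := IsCc) (List.finRange d) _ hu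
    fun _ hh i _ => isCc_iterate_dirD hh (eTh d i) (β.2 i)) (eR d) β.1

theorem ckNorm_nonneg (N : ℕ) (u : Q d → ℂ) : 0 ≤ ckNorm N u :=
  Finset.sum_nonneg fun _ _ => Real.iSup_nonneg fun _ => norm_nonneg _

theorem norm_mderiv1_le_ckNorm (hu : IsCc u) {β : MIdx d} {N : ℕ} (hβ : β ∈ idxSet d N) (x : Q d) :
    ‖mderiv1 β u x‖ ≤ ckNorm N u := by
  obtain ⟨hsmooth, hcompact⟩ := isCc_mderiv1 hu β
  obtain ⟨C, hC⟩ := hcompact.exists_bound_of_continuous hsmooth.continuous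
  calc ‖mderiv1 β u x‖
      ≤ ⨆ y, ‖mderiv1 β u y‖ := le_ciSup ⟨C, Set.forall_mem_range.2 hC⟩ x
    _ ≤ ckNorm N u := Finset.single_le_sum (f := fun β => ⨆ y, ‖mderiv1 β u y‖)
        (fun _ _ => Real.iSup_nonneg fun _ => norm_nonneg _) hβ

end TestFunctions

section JapaneseBrackets

theorem max_one_abs_le_mul_max_one_abs_div {h : ℝ} (hh : h ≠ 0) (x : ℝ) :
    max 1 |x| ≤ max 1 |h| * max 1 |x / h| := by
  refine max_le (one_le_mul_of_one_le_of_one_le (le_max_left _ _) (le_max_left _ _)) ?_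
  calc |x| = |h| * |x / h| := by rw [← abs_mul, mul_div_cancel₀ x hh]
    _ ≤ max 1 |h| * max 1 |x / h| := by gcongr <;> exact le_max_right _ _

theorem rpow_le_rpow_neg_mul_pow {b : ℝ} (hb : 1 ≤ b) (s : ℝ) (N : ℕ) :
    b ^ s ≤ b ^ (-(N : ℝ)) * b ^ (N + ⌈s⌉₊) := by
  rw [← Real.rpow_natCast, ← Real.rpow_add (zero_lt_one.trans_le hb)]
  refine Real.rpow_le_rpow_of_exponent_le hb ?_
  push_cast
  linarith [Nat.le_ceil s]

variable {d : ℕ}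

/-- The pairing `q ↦ p · q` as a continuous linear form. -/
def qdotCLM (p : Q d) : Q d →L[ℝ] ℝ :=
  p.1 • ContinuousLinearMap.fst ℝ ℝ (Fin d → ℝ) +
    ∑ i, p.2 i • (ContinuousLinearMap.proj i).comp (ContinuousLinearMap.snd ℝ ℝ (Fin d → ℝ))

@[simp]
theorem qdotCLM_apply (p x : Q d) : qdotCLM p x = qdot p x := by
  simp [qdotCLM, qdot]

theorem qdot_inv_smul (h : ℝ) (p x : Q d) : qdot (h⁻¹ • p) x = qdot p x / h := by
  simp only [← qdotCLM_apply, qdotCLM, div_eq_inv_mul]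
  simp [Finset.mul_sum, mul_add, mul_assoc]

theorem one_le_brP (p : Q d) : 1 ≤ brP p :=
  Real.one_le_sqrt.2 (by rw [add_assoc]; exact le_add_of_nonneg_right (by positivity))

theorem brP_sq (p : Q d) : brP p ^ 2 = 1 + ∑ o, qdot p (coordDir o) ^ 2 := by
  rw [brP, Real.sq_sqrt (by positivity), Fintype.sum_option]
  simp [qdot, coordDir, eR, eTh, Pi.single_apply, add_assoc]

theorem exists_brP_le_mul_max_one_abs_qdot (p : Q d) :
    ∃ o, brP p ≤ √(d + 2) * max 1 |qdot p (coordDir o)| := by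
  obtain ⟨o, ho⟩ := Finite.exists_max fun o => |qdot p (coordDir o)|
  refine ⟨o, le_of_sq_le_sq ?_ (by positivity)⟩
  set M := max 1 |qdot p (coordDir o)|
  have hcoord (j : Option (Fin d)) : qdot p (coordDir j) ^ 2 ≤ M ^ 2 :=
    sq_le_sq.2 (((ho j).trans (le_max_right _ _)).trans (le_abs_self M))
  calc brP p ^ 2 = 1 + ∑ j, qdot p (coordDir j) ^ 2 := brP_sq p
    _ ≤ M ^ 2 + ∑ _j : Option (Fin d), M ^ 2 :=
        add_le_add (one_le_pow₀ (le_max_left _ _)) (Finset.sum_le_sum fun j _ => hcoord j)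
    _ = (√(d + 2) * M) ^ 2 := by
        rw [mul_pow, Real.sq_sqrt (by positivity)]
        simp
        ring

theorem one_le_brF (f : ℝ → ℝ) (x : Q d × Q d) : 1 ≤ brF f x :=
  Real.one_le_sqrt.2 (by rw [add_assoc]; exact le_add_of_nonneg_right (by positivity))

theorem brF_le_mul_brP {f : ℝ → ℝ} {x : Q d × Q d} {c : ℝ} (hc : 1 ≤ c)
    (hfc : |(f x.1.1)⁻¹| ≤ c) : brF f x ≤ c * brP x.2 := by
  rw [brF, brP, ← Real.sqrt_sq (zero_le_one.trans hc), ← Real.sqrt_mul (sq_nonneg c)]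
  refine Real.sqrt_le_sqrt ?_
  have hc2 : 1 ≤ c ^ 2 := one_le_pow₀ hc
  rw [mul_add, mul_add, Finset.mul_sum, mul_one]
  gcongr with i
  · exact le_mul_of_one_le_left (sq_nonneg _) hc2
  · rw [div_eq_mul_inv, mul_pow, mul_comm]
    exact mul_le_mul_of_nonneg_right (sq_le_sq.2 (hfc.trans (le_abs_self c))) (sq_nonneg _)

theorem brF_rpow_le {f : ℝ → ℝ} {x : Q d × Q d} {c : ℝ} (hc : 1 ≤ c)
    (hfc : |(f x.1.1)⁻¹| ≤ c) (m : ℝ) : brF f x ^ m ≤ c ^ |m| * brP x.2 ^ |m| := by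
  have hc0 : 0 ≤ c := zero_le_one.trans hc
  have hF0 : 0 ≤ brF f x := zero_le_one.trans (one_le_brF f x)
  calc brF f x ^ m ≤ brF f x ^ |m| :=
        Real.rpow_le_rpow_of_exponent_le (one_le_brF f x) (le_abs_self m)
    _ ≤ (c * brP x.2) ^ |m| := Real.rpow_le_rpow hF0 (brF_le_mul_brP hc hfc) (abs_nonneg m)
    _ = c ^ |m| * brP x.2 ^ |m| := Real.mul_rpow hc0 (zero_le_one.trans (one_le_brP _))

end JapaneseBrackets

section Symbols

variable {d : ℕ} {f : ℝ → ℝ} {m : ℝ} {a : Q d × Q d → ℂ}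

theorem IsSymbol.exists_norm_mderiv2_zero_le (ha : IsSymbol f m a) (hf : Continuous f)
    (hpos : ∀ r, 0 < f r) {M : Set (Q d)} (hM : IsCompact M) (α : MIdx d) :
    ∃ A, ∀ y ∈ M, ∀ p, ‖mderiv2 α 0 a (y, p)‖ ≤ A * brP p ^ |m| := by
  obtain ⟨C, hC⟩ := ha.2 α 0
  have hfst : Continuous fun y : Q d => f y.1 := hf.comp continuous_fst
  obtain ⟨F, hF⟩ := hM.exists_bound_of_continuousOn hfst.continuousOn
  obtain ⟨G, hG⟩ := hM.exists_bound_of_continuousOn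
    (hfst.inv₀ fun y => (hpos y.1).ne').continuousOn
  refine ⟨|C| * F ^ degA α * max 1 G ^ |m|, fun y hy p => ?_⟩
  have hfF : f y.1 ≤ F := (le_abs_self _).trans (hF y hy)
  have hfG : |(f y.1)⁻¹| ≤ max 1 G := (hG y hy).trans (le_max_right 1 G)
  have hf0 : 0 ≤ f y.1 := (hpos y.1).le
  have hF0 : 0 ≤ F := hf0.trans hfF
  have hbr0 : 0 ≤ brF f (y, p) ^ m := Real.rpow_nonneg (Real.sqrt_nonneg _) m
  calc ‖mderiv2 α 0 a (y, p)‖ ≤ C * f y.1 ^ degA α * brF f (y, p) ^ m := by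
        simpa [deg, degA, ← Nat.cast_sum, -Nat.cast_sum, Real.rpow_natCast] using hC (y, p)
    _ ≤ |C| * F ^ degA α * (max 1 G ^ |m| * brP p ^ |m|) := by
        gcongr
        · exact le_abs_self C
        · exact brF_rpow_le (x := (y, p)) (le_max_left 1 G) hfG m
    _ = |C| * F ^ degA α * max 1 G ^ |m| * brP p ^ |m| := by ring

theorem IsSymbol.exists_norm_iterate_dirD_le (ha : IsSymbol f m a) (hf : Continuous f)
    (hpos : ∀ r, 0 < f r) {M : Set (Q d)} (hM : IsCompact M) (k : ℕ) :
    ∃ A, ∀ o, ∀ i ≤ k, ∀ y ∈ M, ∀ p,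
      ‖(dirD (coordDir o, 0))^[i] a (y, p)‖ ≤ A * brP p ^ |m| := by
  choose A hA using ha.exists_norm_mderiv2_zero_le hf hpos hM
  obtain ⟨B, hB⟩ := ((idxSet d k).image A).exists_le
  refine ⟨B, fun o i hi y hy p => ?_⟩
  rw [← mderiv2_coordIdx_zero]
  refine (hA (coordIdx i o) y hy p).trans ?_
  have hbr : 0 ≤ brP p ^ |m| := Real.rpow_nonneg (Real.sqrt_nonneg _) _
  gcongr
  exact hB _ (mem_image_of_mem A (coordIdx_mem_idxSet hi o))

theorem IsSymbol.exists_norm_iterate_dirD_interpolate_le (ha : IsSymbol f m a) (hf : Continuous f)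
    (hpos : ∀ r, 0 < f r) (t : ℝ) {K L : Set (Q d)} (hK : IsCompact K) (hL : IsCompact L) (k : ℕ) :
    ∃ A, ∀ o, ∀ i ≤ k, ∀ q ∈ K, ∀ x ∈ L, ∀ p,
      ‖(dirD (coordDir o))^[i] (fun y => a (t • q + (1 - t) • y, p)) x‖ ≤ A * brP p ^ |m| := by
  obtain ⟨A, hA⟩ := ha.exists_norm_iterate_dirD_le hf hpos
    ((hK.prod hL).image (f := fun z : Q d × Q d => t • z.1 + (1 - t) • z.2) (by fun_prop)) k
  refine ⟨max 1 |1 - t| ^ k * A, fun o i hi q hq x hx p => ?_⟩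
  have hscale : |1 - t| ^ i ≤ max 1 |1 - t| ^ k :=
    (pow_le_pow_left₀ (abs_nonneg _) (le_max_right _ _) i).trans
      (pow_le_pow_right₀ (le_max_left _ _) hi)
  rw [iterate_dirD_comp_affine_prodMk ha.1, norm_smul, norm_pow, Real.norm_eq_abs, mul_assoc]
  gcongr
  exact hA o i hi _ ⟨(q, x), ⟨hq, hx⟩, rfl⟩ p

theorem IsSymbol.exists_max_one_pow_mul_norm_integral_le (ha : IsSymbol f m a)
    (hf : Continuous f) (hpos : ∀ r, 0 < f r) (t : ℝ) {K L : Set (Q d)} (hK : IsCompact K)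
    (hL : IsCompact L) (k : ℕ) :
    ∃ A, ∀ ξ : Q d, ∀ o, ∀ q ∈ K, ∀ p, ∀ u : Q d → ℂ, IsCc u → tsupport u ⊆ L →
      max 1 |qdot ξ (coordDir o)| ^ k *
          ‖∫ x, a (t • q + (1 - t) • x, p) * u x * Complex.exp (-Complex.I * qdot ξ x)‖ ≤
        A * (brP p ^ |m| * ckNorm k u) := by
  obtain ⟨A, hA⟩ := ha.exists_norm_iterate_dirD_interpolate_le hf hpos t hK hL k
  refine ⟨2 ^ k * A * volume.real L, fun ξ o q hq p u hu huL => ?_⟩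
  have hsmooth : ContDiff ℝ (⊤ : ℕ∞) fun x : Q d => a (t • q + (1 - t) • x, p) :=
    ha.1.comp (by fun_prop)
  have hbound := max_one_abs_pow_mul_norm_integral_mul_cexp_le (μ := volume) (qdotCLM ξ)
    (coordDir o) k hsmooth hu.1 hL huL (fun i hi x hx => hA o i hi q hq x hx p)
    fun i hi x _ => by
      simpa only [mderiv1_coordIdx] using norm_mderiv1_le_ckNorm hu (coordIdx_mem_idxSet hi o) x
  simp only [qdotCLM_apply] at hbound
  exact hbound.trans_eq (by ring)

theorem IsSymbol.exists_brP_pow_mul_norm_integral_le (ha : IsSymbol f m a)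
    (hf : Continuous f) (hpos : ∀ r, 0 < f r) (t : ℝ) {K L : Set (Q d)} (hK : IsCompact K)
    (hL : IsCompact L) (k : ℕ) :
    ∃ A, ∀ ℏ : ℝ, ℏ ≠ 0 → ∀ q ∈ K, ∀ p, ∀ u : Q d → ℂ, IsCc u → tsupport u ⊆ L →
      brP p ^ k * ‖∫ x, a (t • q + (1 - t) • x, p) *
          Complex.exp (-Complex.I * Complex.ofReal (qdot p x) / Complex.ofReal ℏ) * u x‖ ≤
        A * max 1 |ℏ| ^ k * (brP p ^ |m| * ckNorm k u) := by
  obtain ⟨A, hA⟩ := ha.exists_max_one_pow_mul_norm_integral_le hf hpos t hK hL k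
  refine ⟨√(d + 2) ^ k * A, fun ℏ hℏ q hq p u hu huL => ?_⟩
  obtain ⟨o, ho⟩ := exists_brP_le_mul_max_one_abs_qdot p
  have hphase : (fun x => a (t • q + (1 - t) • x, p) *
      Complex.exp (-Complex.I * Complex.ofReal (qdot p x) / Complex.ofReal ℏ) * u x) = fun x =>
      a (t • q + (1 - t) • x, p) * u x * Complex.exp (-Complex.I * qdot (ℏ⁻¹ • p) x) := by
    funext x
    rw [qdot_inv_smul, Complex.ofReal_div, mul_div_assoc, mul_right_comm]
  have hint := hA (ℏ⁻¹ • p) o q hq p u hu huL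
  rw [qdot_inv_smul] at hint
  rw [hphase]
  set I := ‖∫ x, a (t • q + (1 - t) • x, p) * u x * Complex.exp (-Complex.I * qdot (ℏ⁻¹ • p) x)‖
  have hbr : 0 ≤ brP p := Real.sqrt_nonneg _
  calc brP p ^ k * I
      ≤ (√(d + 2) * (max 1 |ℏ| * max 1 |qdot p (coordDir o) / ℏ|)) ^ k * I := by
        gcongr
        exact ho.trans (by gcongr; exact max_one_abs_le_mul_max_one_abs_div hℏ _)
    _ = √(d + 2) ^ k * max 1 |ℏ| ^ k * (max 1 |qdot p (coordDir o) / ℏ| ^ k * I) := by ring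
    _ ≤ √(d + 2) ^ k * max 1 |ℏ| ^ k * (A * (brP p ^ |m| * ckNorm k u)) := by gcongr
    _ = √(d + 2) ^ k * A * max 1 |ℏ| ^ k * (brP p ^ |m| * ckNorm k u) := by ring

end Symbols

theorem statement1_general {d : ℕ} {f : ℝ → ℝ} (hf : Continuous f) (hpos : ∀ r, 0 < f r) {m : ℝ}
    (t : ℝ) {a : Q d × Q d → ℂ} (ha : IsSymbol f m a) {K L : Set (Q d)} (hK : IsCompact K)
    (hL : IsCompact L) (N : ℕ) :
    ∃ C > (0 : ℝ), ∃ N' : ℕ, ∀ ℏ : ℝ, ℏ ≠ 0 → ∀ q ∈ K, ∀ p : Q d, ∀ u : Q d → ℂ,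
      IsCc u → tsupport u ⊆ L →
        ‖∫ q' : Q d, a (t • q + (1 - t) • q', p) *
            Complex.exp (-Complex.I * Complex.ofReal (qdot p q') / Complex.ofReal ℏ) * u q'‖
          ≤ C * max 1 |ℏ| ^ N' * brP p ^ (-(N : ℝ)) * ckNorm N' u := by
  set k := N + ⌈|m|⌉₊
  obtain ⟨A, hA⟩ := ha.exists_brP_pow_mul_norm_integral_le hf hpos t hK hL k
  refine ⟨max 1 A, by positivity, k, fun ℏ hℏ q hq p u hu huL => ?_⟩
  have hbr : 0 < brP p := zero_lt_one.trans_le (one_le_brP p)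
  have hck := ckNorm_nonneg k u
  refine le_of_mul_le_mul_left ((hA ℏ hℏ q hq p u hu huL).trans ?_) (pow_pos hbr k)
  calc A * max 1 |ℏ| ^ k * (brP p ^ |m| * ckNorm k u)
      ≤ max 1 A * max 1 |ℏ| ^ k * (brP p ^ (-(N : ℝ)) * brP p ^ k * ckNorm k u) := by
        gcongr
        · exact le_max_right 1 A
        · exact rpow_le_rpow_neg_mul_pow (one_le_brP p) |m| N
    _ = brP p ^ k * (max 1 A * max 1 |ℏ| ^ k * brP p ^ (-(N : ℝ)) * ckNorm k u) := by ring

/-- rapid decay in `p` of the inner integral, locally uniformly in `q`. -/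
theorem statement1 (d : ℕ) (f : ℝ → ℝ) (hf : GoodF f) (m t ℏ : ℝ)
    (ht : t ∈ Set.Icc (0 : ℝ) 1) (hℏ : ℏ ∈ Set.Ioc (0 : ℝ) 1)
    (a : Q d × Q d → ℂ) (ha : IsSymbol f m a)
    (K L : Set (Q d)) (hK : IsCompact K) (hL : IsCompact L) (N : ℕ) :
    ∃ C > (0 : ℝ), ∃ N' : ℕ, ∀ q ∈ K, ∀ p : Q d, ∀ u : Q d → ℂ,
      IsCc u → tsupport u ⊆ L →
        ‖∫ q' : Q d, a (t • q + (1 - t) • q', p) *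
            Complex.exp (-Complex.I * Complex.ofReal (qdot p q') / Complex.ofReal ℏ) * u q'‖
          ≤ C * brP p ^ (-(N : ℝ)) * ckNorm N' u := by
  obtain ⟨C, hC, N', h⟩ := statement1_general hf.1.continuous
    (fun r => one_pos.trans_le (hf.2.1 r)) t ha hK hL N
  have hmax : max 1 |ℏ| = 1 := max_eq_left (abs_le.2 ⟨by linarith [hℏ.1], hℏ.2⟩)
  exact ⟨C, hC, N', by simpa only [hmax, one_pow, mul_one] using h ℏ hℏ.1.ne'⟩

end
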